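/- arXiv:2104.00755 — 5 statements merged into one kernel-verified Lean document; each statement's English description precedes it below -/
import Mathlib

section
/- Fix K ≥ 1 and z ∈ ℝ^K. There exists a unique τ ∈ ℝ such that Σ_{i=1}^K max(z_i − τ, 0) = 1. Moreover, the vector y* with y*_i = max(z_i − τ, 0) lies in Δ_{K-1} and is the unique minimizer of the Euclidean distance ‖y − z‖₂ over y ∈ Δ_{K-1}; that is, sparsemax(z) = y*. -/
/-!
The mass `∑ i, max (z i - τ) 0` is continuous in `τ`, vanishes for large `τ` and is large for small
`τ`, so it attains every nonnegative value; it is strictly decreasing where it is positive, so it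
attains every positive value only once.

Let `p i = max (z i - τ) 0`. The multiplier `p i - (z i - τ)` is nonnegative and vanishes wherever
`p i > 0`, so `(y i - p i) * (p i - (z i - τ)) ≥ 0` for `y ≥ 0`. Summing over `i`, the terms in `τ`
cancel when `y` and `p` have the same mass, which leaves the variational inequality
`⟪y - p, p - z⟫ ≥ 0`, hence `‖p - z‖² + ‖y - p‖² ≤ ‖y - z‖²`.
-/

open Finset

/-- The simplex of nonnegative vectors of total mass `c`, the feasible set of the projection
problem; `scaledSimplex ι 1` unfolds to the same set as `stdSimplex ℝ ι`. -/
def scaledSimplex (ι : Type*) [Fintype ι] (c : ℝ) : Set (ι → ℝ) :=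
  {y | (∀ i, 0 ≤ y i) ∧ ∑ i, y i = c}

section Mass

variable {ι R : Type*} [Fintype ι]

theorem strictAntiOn_sum_max_sub_zero [AddCommGroup R] [LinearOrder R] [IsOrderedAddMonoid R]
    (z : ι → R) :
    StrictAntiOn (fun τ => ∑ i, max (z i - τ) 0) {τ | 0 < ∑ i, max (z i - τ) 0} := by
  intro σ _ τ hτ hστ
  obtain ⟨i, hi, hpos⟩ : ∃ i ∈ univ, 0 < max (z i - τ) 0 :=
    exists_lt_of_sum_lt (sum_const_zero.trans_lt hτ)
  have hlt : z i - τ < z i - σ := sub_lt_sub_left hστ _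
  refine sum_lt_sum (fun j _ => max_le_max_right 0 (sub_le_sub_left hστ.le _)) ⟨i, hi, ?_⟩
  exact max_lt (lt_max_of_lt_left hlt) (hpos.trans_le (max_le_max_right 0 hlt.le))

theorem exists_sum_max_sub_zero_eq [Nonempty ι] (z : ι → ℝ) {c : ℝ} (hc : 0 ≤ c) :
    ∃ τ : ℝ, ∑ i, max (z i - τ) 0 = c := by
  have hcont : Continuous fun τ : ℝ => ∑ i, max (z i - τ) 0 := by fun_prop
  have hsmall : ∃ τ, ∑ i, max (z i - τ) 0 ≤ c := by
    obtain ⟨b, hb⟩ := Finite.exists_le z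
    exact ⟨b, (sum_eq_zero fun i _ => max_eq_right (sub_nonpos.2 (hb i))).trans_le hc⟩
  have hlarge : ∃ τ, c ≤ ∑ i, max (z i - τ) 0 := by
    obtain ⟨j⟩ := ‹Nonempty ι›
    refine ⟨z j - c, ?_⟩
    calc c = z j - (z j - c) := (sub_sub_cancel _ _).symm
      _ ≤ max (z j - (z j - c)) 0 := le_max_left _ _
      _ ≤ ∑ i, max (z i - (z j - c)) 0 :=
        single_le_sum (f := fun i => max (z i - (z j - c)) 0)
          (fun _ _ => le_max_right _ _) (mem_univ j)
  exact mem_range_of_exists_le_of_exists_ge hcont hsmall hlarge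

theorem existsUnique_sum_max_sub_zero_eq [Nonempty ι] (z : ι → ℝ) {c : ℝ} (hc : 0 < c) :
    ∃! τ : ℝ, ∑ i, max (z i - τ) 0 = c := by
  obtain ⟨τ, hτ⟩ := exists_sum_max_sub_zero_eq z hc.le
  refine ⟨τ, hτ, fun σ hσ => ?_⟩
  exact (strictAntiOn_sum_max_sub_zero z).injOn (hc.trans_eq hσ.symm) (hc.trans_eq hτ.symm)
    (hσ.trans hτ.symm)

end Mass

section Projection

variable {ι R : Type*} [Fintype ι] [CommRing R] [LinearOrder R] [IsStrictOrderedRing R]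

theorem sub_max_zero_mul_max_zero_sub_nonneg (x : R) {y : R} (hy : 0 ≤ y) :
    0 ≤ (y - max x 0) * (max x 0 - x) := by
  rcases le_total x 0 with hx | hx
  · simpa only [max_eq_right hx, sub_zero, zero_sub] using mul_nonneg hy (neg_nonneg.2 hx)
  · simp only [max_eq_left hx, sub_self, mul_zero, le_refl]

variable {z y : ι → R} {τ : R}

theorem sum_sub_max_mul_max_sub_nonneg (hy : ∀ i, 0 ≤ y i)
    (hmass : ∑ i, y i = ∑ i, max (z i - τ) 0) :
    0 ≤ ∑ i, (y i - max (z i - τ) 0) * (max (z i - τ) 0 - z i) := by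
  have hcancel : ∑ i, (y i - max (z i - τ) 0) * τ = 0 := by
    rw [← sum_mul, sum_sub_distrib, hmass, sub_self, zero_mul]
  calc 0 ≤ ∑ i, (y i - max (z i - τ) 0) * (max (z i - τ) 0 - (z i - τ)) :=
        sum_nonneg fun i _ => sub_max_zero_mul_max_zero_sub_nonneg _ (hy i)
    _ = ∑ i, (y i - max (z i - τ) 0) * (max (z i - τ) 0 - z i) +
          ∑ i, (y i - max (z i - τ) 0) * τ := by
        rw [← sum_add_distrib]
        exact sum_congr rfl fun i _ => by ring
    _ = ∑ i, (y i - max (z i - τ) 0) * (max (z i - τ) 0 - z i) := by rw [hcancel, add_zero]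

theorem sum_sq_max_sub_add_sum_sq_sub_max_le (hy : ∀ i, 0 ≤ y i)
    (hmass : ∑ i, y i = ∑ i, max (z i - τ) 0) :
    ∑ i, (max (z i - τ) 0 - z i) ^ 2 + ∑ i, (y i - max (z i - τ) 0) ^ 2
      ≤ ∑ i, (y i - z i) ^ 2 := by
  have hexpand : ∑ i, (y i - z i) ^ 2 =
      ∑ i, (max (z i - τ) 0 - z i) ^ 2 + ∑ i, (y i - max (z i - τ) 0) ^ 2 +
        2 * ∑ i, (y i - max (z i - τ) 0) * (max (z i - τ) 0 - z i) := by
    rw [mul_sum, ← sum_add_distrib, ← sum_add_distrib]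
    exact sum_congr rfl fun i _ => by ring
  rw [hexpand]
  exact le_add_of_nonneg_right (mul_nonneg zero_le_two (sum_sub_max_mul_max_sub_nonneg hy hmass))

theorem sum_sq_max_sub_le (hy : ∀ i, 0 ≤ y i) (hmass : ∑ i, y i = ∑ i, max (z i - τ) 0) :
    ∑ i, (max (z i - τ) 0 - z i) ^ 2 ≤ ∑ i, (y i - z i) ^ 2 :=
  (le_add_of_nonneg_right (sum_nonneg fun _ _ => sq_nonneg _)).trans
    (sum_sq_max_sub_add_sum_sq_sub_max_le hy hmass)

theorem eq_max_sub_zero_of_sum_sq_sub_le (hy : ∀ i, 0 ≤ y i)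
    (hmass : ∑ i, y i = ∑ i, max (z i - τ) 0)
    (hle : ∑ i, (y i - z i) ^ 2 ≤ ∑ i, (max (z i - τ) 0 - z i) ^ 2) :
    y = fun i => max (z i - τ) 0 := by
  have hnonpos : ∑ i, (y i - max (z i - τ) 0) ^ 2 ≤ 0 :=
    nonpos_of_add_le_right ((sum_sq_max_sub_add_sum_sq_sub_max_le hy hmass).trans hle)
  have hzero := (sum_eq_zero_iff_of_nonneg fun _ _ => sq_nonneg _).1
    (hnonpos.antisymm (sum_nonneg fun _ _ => sq_nonneg _))
  exact funext fun i => sub_eq_zero.1 (sq_eq_zero_iff.1 (hzero i (mem_univ i)))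

end Projection

theorem sparsemax_threshold_characterization_general {ι : Type*} [Fintype ι] [Nonempty ι]
    (z : ι → ℝ) {c : ℝ} (hc : 0 < c) :
    (∃! τ : ℝ, ∑ i, max (z i - τ) 0 = c) ∧
    (∀ τ : ℝ, (∑ i, max (z i - τ) 0 = c) →
      (fun i => max (z i - τ) 0) ∈ scaledSimplex ι c ∧
      (∀ y : ι → ℝ, y ∈ scaledSimplex ι c →
        √(∑ i, (max (z i - τ) 0 - z i) ^ 2) ≤ √(∑ i, (y i - z i) ^ 2)) ∧
      (∀ y : ι → ℝ, y ∈ scaledSimplex ι c →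
        √(∑ i, (y i - z i) ^ 2) = √(∑ i, (max (z i - τ) 0 - z i) ^ 2) →
        y = fun i => max (z i - τ) 0)) := by
  refine ⟨existsUnique_sum_max_sub_zero_eq z hc, fun τ hτ =>
    ⟨⟨fun _ => le_max_right _ _, hτ⟩, fun y hy => ?_, fun y hy heq => ?_⟩⟩
  · exact Real.sqrt_le_sqrt (sum_sq_max_sub_le hy.1 (hy.2.trans hτ.symm))
  · exact eq_max_sub_zero_of_sum_sq_sub_le hy.1 (hy.2.trans hτ.symm)
      ((Real.sqrt_le_sqrt_iff (sum_nonneg fun _ _ => sq_nonneg _)).1 heq.le)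

/-- **Sparsemax: Euclidean projection onto the simplex via a threshold.**
For `z ∈ ℝ^K` (`K ≥ 1`) there is a unique `τ ∈ ℝ` with `Σ_i max(z_i − τ, 0) = 1`;
moreover, for this `τ`, the vector `y*` with `y*_i = max(z_i − τ, 0)` lies in
`Δ_{K-1}` and is the unique minimizer of the Euclidean distance `‖y − z‖₂` over
`y ∈ Δ_{K-1}`, i.e. `sparsemax(z) = y*`. -/
theorem sparsemax_threshold_characterization (K : ℕ) (hK : 1 ≤ K) (z : Fin K → ℝ) :
    (∃! τ : ℝ, ∑ i : Fin K, max (z i - τ) 0 = 1) ∧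
    (∀ τ : ℝ, (∑ i : Fin K, max (z i - τ) 0 = 1) →
      (fun i => max (z i - τ) 0) ∈ stdSimplex ℝ (Fin K) ∧
      (∀ y : Fin K → ℝ, y ∈ stdSimplex ℝ (Fin K) →
        Real.sqrt (∑ i : Fin K, (max (z i - τ) 0 - z i) ^ 2)
          ≤ Real.sqrt (∑ i : Fin K, (y i - z i) ^ 2)) ∧
      (∀ y : Fin K → ℝ, y ∈ stdSimplex ℝ (Fin K) →
        Real.sqrt (∑ i : Fin K, (y i - z i) ^ 2)
          = Real.sqrt (∑ i : Fin K, (max (z i - τ) 0 - z i) ^ 2) →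
        y = fun i => max (z i - τ) 0)) := by
  have : Nonempty (Fin K) := ⟨⟨0, hK⟩⟩
  exact sparsemax_threshold_characterization_general z one_pos
end

section
/- For every t ∈ ℝ, the Euclidean projection of the point (t, 0) ∈ ℝ² onto the simplex Δ_1 is the point (s, 1−s) with s = min(1, max(0, (t+1)/2)); that is, for K = 2, sparsemax is a 'hard sigmoid'. In particular the projection equals the vertex (1,0) for all t ≥ 1 and the vertex (0,1) for all t ≤ −1 (saturation at t = ±1). -/
/-!
On the line `y₁ + y₂ = c` the squared distance to `(z₁, z₂)` is, up to a constant, twice the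
squared distance from `y₁` to `m = (z₁ - z₂ + c) / 2`. Minimizing it over a segment of that line is
therefore a one-dimensional projection problem, solved by clipping `m` to the interval allowed for
`y₁`. The obtuse-angle inequality for the clipped point `s` shows that the objective exceeds its
minimum by at least `2 (y₁ - s)²`, whence both minimality and uniqueness.
-/

section Clipping

variable {R : Type*} [CommRing R] [LinearOrder R] [IsStrictOrderedRing R] {a b y : R}

lemma min_max_sub_mul_sub_min_max_nonneg (x : R) (hay : a ≤ y) (hyb : y ≤ b) :
    0 ≤ (min b (max a x) - x) * (y - min b (max a x)) := by
  have hab : a ≤ b := hay.trans hyb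
  rcases le_total x a with hxa | hax
  · rw [max_eq_left hxa, min_eq_right hab]
    exact mul_nonneg (sub_nonneg.2 hxa) (sub_nonneg.2 hay)
  · rw [max_eq_right hax]
    rcases le_total x b with hxb | hbx
    · rw [min_eq_right hxb, sub_self, zero_mul]
    · rw [min_eq_left hbx]
      exact mul_nonneg_of_nonpos_of_nonpos (sub_nonpos.2 hbx) (sub_nonpos.2 hyb)

lemma sq_min_max_sub_add_sq_sub_min_max_le (x : R) (hay : a ≤ y) (hyb : y ≤ b) :
    (min b (max a x) - x) ^ 2 + (y - min b (max a x)) ^ 2 ≤ (y - x) ^ 2 := by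
  linear_combination 2 * min_max_sub_mul_sub_min_max_nonneg x hay hyb

end Clipping

lemma sq_sub_add_sq_sub_of_add_eq {K : Type*} [Field K] [NeZero (2 : K)] {y₁ y₂ c : K}
    (z₁ z₂ : K) (hy : y₁ + y₂ = c) :
    (y₁ - z₁) ^ 2 + (y₂ - z₂) ^ 2 =
      2 * (y₁ - (z₁ - z₂ + c) / 2) ^ 2 + (z₁ + z₂ - c) ^ 2 / 2 := by
  subst hy
  field_simp
  ring

lemma sq_sub_add_sq_sub_add_two_mul_sq_le_of_eq_min_max {K : Type*} [Field K] [LinearOrder K]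
    [IsStrictOrderedRing K] {a b c y₁ y₂ s : K} (z₁ z₂ : K)
    (hs : s = min b (max a ((z₁ - z₂ + c) / 2)))
    (hay : a ≤ y₁) (hyb : y₁ ≤ b) (hy : y₁ + y₂ = c) :
    (s - z₁) ^ 2 + (c - s - z₂) ^ 2 + 2 * (y₁ - s) ^ 2 ≤ (y₁ - z₁) ^ 2 + (y₂ - z₂) ^ 2 := by
  rw [sq_sub_add_sq_sub_of_add_eq z₁ z₂ hy,
    sq_sub_add_sq_sub_of_add_eq z₁ z₂ (add_sub_cancel s c), hs]
  linear_combination 2 * sq_min_max_sub_add_sq_sub_min_max_le ((z₁ - z₂ + c) / 2) hay hyb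

/-- **Two-dimensional sparsemax is a hard sigmoid.**
For every `t ∈ ℝ`, the Euclidean projection of `(t, 0) ∈ ℝ²` onto the simplex
`Δ₁ = {(y₁, y₂) : y₁, y₂ ≥ 0, y₁ + y₂ = 1}` is `(s, 1 − s)` with
`s = min(1, max(0, (t+1)/2))`: the point `(s, 1−s)` lies in `Δ₁`, minimizes the
Euclidean distance to `(t, 0)`, and is the unique such minimizer.  In particular
the projection saturates: it equals the vertex `(1,0)` for all `t ≥ 1` and the
vertex `(0,1)` for all `t ≤ −1`. -/
theorem sparsemax_two_dim_hard_sigmoid (t : ℝ) :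
    let s : ℝ := min 1 (max 0 ((t + 1) / 2))
    (0 ≤ s ∧ 0 ≤ 1 - s ∧ s + (1 - s) = 1) ∧
    (∀ y₁ y₂ : ℝ, 0 ≤ y₁ → 0 ≤ y₂ → y₁ + y₂ = 1 →
      Real.sqrt ((s - t) ^ 2 + (1 - s - 0) ^ 2)
        ≤ Real.sqrt ((y₁ - t) ^ 2 + (y₂ - 0) ^ 2)) ∧
    (∀ y₁ y₂ : ℝ, 0 ≤ y₁ → 0 ≤ y₂ → y₁ + y₂ = 1 →
      Real.sqrt ((y₁ - t) ^ 2 + (y₂ - 0) ^ 2)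
        = Real.sqrt ((s - t) ^ 2 + (1 - s - 0) ^ 2) →
      y₁ = s ∧ y₂ = 1 - s) ∧
    (1 ≤ t → s = 1) ∧ (t ≤ -1 → s = 0) := by
  intro s
  have growth {y₁ y₂ : ℝ} (h₁ : 0 ≤ y₁) (h₂ : 0 ≤ y₂) (hy : y₁ + y₂ = 1) :
      (s - t) ^ 2 + (1 - s - 0) ^ 2 + 2 * (y₁ - s) ^ 2 ≤ (y₁ - t) ^ 2 + (y₂ - 0) ^ 2 :=
    sq_sub_add_sq_sub_add_two_mul_sq_le_of_eq_min_max t 0 (by rw [sub_zero]) h₁ (by linarith) hy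
  refine ⟨⟨le_min zero_le_one (le_max_left _ _), sub_nonneg.2 (min_le_left _ _),
    add_sub_cancel s 1⟩, fun y₁ y₂ h₁ h₂ hy ↦ ?minimal, fun y₁ y₂ h₁ h₂ hy hdist ↦ ?unique,
    fun ht ↦ min_eq_left (le_max_of_le_right (by linarith)), fun ht ↦ ?saturation⟩
  case minimal =>
    exact Real.sqrt_le_sqrt (by linarith [growth h₁ h₂ hy, sq_nonneg (y₁ - s)])
  case unique =>
    rw [Real.sqrt_inj (by positivity) (by positivity)] at hdist
    have hsq : (y₁ - s) ^ 2 ≤ 0 := by linarith [growth h₁ h₂ hy]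
    have hy₁ : y₁ = s := sub_eq_zero.1 (sq_nonpos_iff _ |>.1 hsq)
    exact ⟨hy₁, by linarith⟩
  case saturation =>
    have hmax : max 0 ((t + 1) / 2) = 0 := max_eq_left (by linarith)
    exact (congrArg (min 1) hmax).trans (min_eq_right zero_le_one)
end

section
/- (Gumbel-max trick.) Fix K ≥ 1, z ∈ ℝ^K, and let μ be the product measure on ℝ^K whose coordinates are independent standard Gumbel measures. Then for each k ∈ [K], μ({g ∈ ℝ^K : z_k + g_k > z_j + g_j for all j ≠ k}) = exp(z_k) / Σ_{j=1}^K exp(z_j) = softmax(z)_k; that is, the argmax of independently Gumbel-perturbed scores is distributed as the categorical distribution softmax(z). -/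
/-!
Condition on the `k`-th coordinate, written as `g k = -log (-log u)` with `u` uniform on `(0, 1)`.
The Gumbel distribution function is `t ↦ exp (-exp (-t))`, so each other coordinate satisfies
`z j + g j < z k + g k` with conditional probability `u ^ exp (z j - z k)`. By independence the
conditional probability of the event is `u ^ S` with `S = ∑ j ≠ k, exp (z j - z k)`, and integrating
over `u` gives `1 / (S + 1) = exp (z k) / ∑ j, exp (z j)`.
-/

open MeasureTheory

/-- The standard Gumbel measure: the pushforward of the uniform probability measure
on `(0,1)` under `u ↦ −log(−log u)`. -/
noncomputable def gumbelMeasure : Measure ℝ :=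
  Measure.map (fun u : ℝ => -Real.log (-Real.log u))
    (volume.restrict (Set.Ioo (0 : ℝ) 1))

open Real Set

section ProductMeasure

variable {ι : Type*} [Fintype ι] [DecidableEq ι] {X : ι → Type*} [∀ i, MeasurableSpace (X i)]
  (μ : ∀ i, Measure (X i)) [∀ i, SigmaFinite (μ i)] (k : ι)

lemma measurePreserving_eval_prodMk_restrict_ne :
    MeasurePreserving (fun g : ∀ i, X i => (g k, fun j : {j // j ≠ k} => g j)) (Measure.pi μ)
      ((μ k).prod (Measure.pi fun j : {j // j ≠ k} => μ j)) := by
  -- Overrides `Fintype.subtypeEq`, which is not the instance occurring in `split`.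
  let : Fintype {i // i = k} := Subtype.fintype _
  have split := measurePreserving_piEquivPiSubtypeProd μ (· = k)
  have eval := measurePreserving_piUnique fun i : {i // i = k} => μ i
  exact (eval.prod (.id _)).comp split

lemma measure_pi_forall_ne_mem_eq_lintegral_prod {A : ∀ j, Set (X k × X j)}
    (hA : ∀ j, j ≠ k → MeasurableSet (A j)) :
    Measure.pi μ {g | ∀ j, j ≠ k → (g k, g j) ∈ A j}
      = ∫⁻ x, ∏ j ∈ Finset.univ.erase k, μ j (Prod.mk x ⁻¹' A j) ∂μ k := by
  let B : Set (X k × ∀ j : {j // j ≠ k}, X j) := {p | ∀ j : {j // j ≠ k}, (p.1, p.2 j) ∈ A j}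
  have hB : MeasurableSet B := by
    simp only [B, Set.ofPred_forall]
    exact .iInter fun j =>
      (measurable_fst.prodMk ((measurable_pi_apply j).comp measurable_snd)) (hA j j.2)
  have event_eq : {g : ∀ i, X i | ∀ j, j ≠ k → (g k, g j) ∈ A j}
      = (fun g => (g k, fun j : {j // j ≠ k} => g j)) ⁻¹' B := by
    ext g
    simp [B]
  have slice_eq (x : X k) : Prod.mk x ⁻¹' B = Set.univ.pi fun j : {j // j ≠ k} =>
      Prod.mk x ⁻¹' A j := by
    ext y
    simp [B]
  rw [event_eq, (measurePreserving_eval_prodMk_restrict_ne μ k).measure_preimage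
    hB.nullMeasurableSet, Measure.prod_apply hB]
  refine lintegral_congr fun x => ?_
  rw [slice_eq, Measure.pi_pi]
  exact (Finset.prod_subtype _ (by simp) fun j => μ j (Prod.mk x ⁻¹' A j)).symm

end ProductMeasure

lemma lintegral_rpow_Ioo_zero {b r : ℝ} (hb : 0 ≤ b) (hr : -1 < r) :
    ∫⁻ u in Ioo 0 b, ENNReal.ofReal (u ^ r) = ENNReal.ofReal (b ^ (r + 1) / (r + 1)) := by
  have integrable_rpow : IntegrableOn (fun u : ℝ => u ^ r) (Ioc 0 b) :=
    (intervalIntegrable_iff_integrableOn_Ioc_of_le hb).1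
      (intervalIntegral.intervalIntegrable_rpow' hr)
  have rpow_nonneg_ae : 0 ≤ᵐ[volume.restrict (Ioc 0 b)] fun u => u ^ r := by
    filter_upwards [ae_restrict_mem measurableSet_Ioc] with u hu
    exact rpow_nonneg hu.1.le r
  rw [setLIntegral_congr Ioo_ae_eq_Ioc,
    ← ofReal_integral_eq_lintegral_ofReal integrable_rpow rpow_nonneg_ae,
    ← intervalIntegral.integral_of_le hb, integral_rpow (.inl hr),
    zero_rpow (by linarith), sub_zero]

/-- The quantile function of the standard Gumbel distribution, meaningful for `u ∈ (0, 1)`; outside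
this interval its values are junk. -/
noncomputable def gumbelQuantile (u : ℝ) : ℝ := -log (-log u)

lemma measurable_gumbelQuantile : Measurable gumbelQuantile := by
  unfold gumbelQuantile
  fun_prop

lemma gumbelQuantile_lt_iff {u t : ℝ} (hu : u ∈ Ioo 0 1) :
    gumbelQuantile u < t ↔ u < exp (-exp (-t)) := by
  rw [gumbelQuantile, neg_lt, lt_log_iff_exp_lt (neg_pos.2 (log_neg hu.1 hu.2)), lt_neg,
    log_lt_iff_lt_exp hu.1]

lemma exp_neg_exp_neg_gumbelQuantile_sub {u : ℝ} (hu : u ∈ Ioo 0 1) (a : ℝ) :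
    exp (-exp (-(gumbelQuantile u - a))) = u ^ exp a := by
  have exp_neg_gumbelQuantile : exp (-gumbelQuantile u) = -log u := by
    rw [gumbelQuantile, neg_neg, exp_log (neg_pos.2 (log_neg hu.1 hu.2))]
  rw [rpow_def_of_pos hu.1, neg_sub, sub_eq_add_neg, Real.exp_add, exp_neg_gumbelQuantile,
    mul_neg, neg_neg, mul_comm]

instance : IsProbabilityMeasure gumbelMeasure :=
  have : IsProbabilityMeasure (volume.restrict (Ioo (0 : ℝ) 1)) := ⟨by simp⟩
  Measure.isProbabilityMeasure_map measurable_gumbelQuantile.aemeasurable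

lemma gumbelMeasure_Iio (t : ℝ) :
    gumbelMeasure (Iio t) = ENNReal.ofReal (exp (-exp (-t))) := by
  have exp_lt_one : exp (-exp (-t)) < 1 := by simp [exp_pos]
  have preimage_eq : gumbelQuantile ⁻¹' Iio t ∩ Ioo 0 1 = Ioo 0 (exp (-exp (-t))) := by
    ext u
    constructor
    · rintro ⟨h_lt, hu⟩
      exact ⟨hu.1, (gumbelQuantile_lt_iff hu).1 h_lt⟩
    · rintro ⟨h_pos, h_lt⟩
      have hu : u ∈ Ioo 0 1 := ⟨h_pos, h_lt.trans exp_lt_one⟩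
      exact ⟨(gumbelQuantile_lt_iff hu).2 h_lt, hu⟩
  calc gumbelMeasure (Iio t)
      = volume (gumbelQuantile ⁻¹' Iio t ∩ Ioo 0 1) := by
        rw [← Measure.restrict_apply (measurable_gumbelQuantile measurableSet_Iio)]
        exact Measure.map_apply measurable_gumbelQuantile measurableSet_Iio
    _ = ENNReal.ofReal (exp (-exp (-t))) := by rw [preimage_eq, volume_Ioo, sub_zero]

lemma lintegral_gumbelMeasure {f : ℝ → ENNReal} (hf : Measurable f) :
    ∫⁻ x, f x ∂gumbelMeasure = ∫⁻ u in Ioo 0 1, f (gumbelQuantile u) :=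
  lintegral_map hf measurable_gumbelQuantile

lemma lintegral_prod_gumbelMeasure_Iio_sub {ι : Type*} (s : Finset ι) (a : ι → ℝ) :
    ∫⁻ x, ∏ j ∈ s, gumbelMeasure (Iio (x - a j)) ∂gumbelMeasure
      = ENNReal.ofReal (1 / (∑ j ∈ s, exp (a j) + 1)) := by
  have sum_nonneg : 0 ≤ ∑ j ∈ s, exp (a j) := by positivity
  have prod_eq_rpow : ∀ u ∈ Ioo (0 : ℝ) 1,
      ∏ j ∈ s, ENNReal.ofReal (exp (-exp (-(gumbelQuantile u - a j))))
        = ENNReal.ofReal (u ^ ∑ j ∈ s, exp (a j)) := fun u hu => by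
    simp only [exp_neg_exp_neg_gumbelQuantile_sub hu]
    rw [← ENNReal.ofReal_prod_of_nonneg fun _ _ => rpow_nonneg hu.1.le _, ← rpow_sum_of_pos hu.1]
  simp only [gumbelMeasure_Iio]
  rw [lintegral_gumbelMeasure (by fun_prop), setLIntegral_congr_fun measurableSet_Ioo prod_eq_rpow,
    lintegral_rpow_Ioo_zero zero_le_one (by linarith), one_rpow]

lemma exp_div_sum_exp_eq_one_div {ι : Type*} [DecidableEq ι] {s : Finset ι} {k : ι} (hk : k ∈ s)
    (z : ι → ℝ) :
    exp (z k) / ∑ j ∈ s, exp (z j) = 1 / (∑ j ∈ s.erase k, exp (z j - z k) + 1) := by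
  have sum_div : (∑ j ∈ s, exp (z j)) / exp (z k) = ∑ j ∈ s.erase k, exp (z j - z k) + 1 := by
    simp only [← Finset.sum_erase_add s _ hk, add_div, Finset.sum_div, Real.exp_sub,
      div_self (exp_ne_zero (z k))]
  rw [← sum_div, one_div_div]

theorem gumbel_max_trick_general {ι : Type*} [Fintype ι] (z : ι → ℝ) (k : ι) :
    Measure.pi (fun _ : ι => gumbelMeasure) {g : ι → ℝ | ∀ j, j ≠ k → z j + g j < z k + g k}
      = ENNReal.ofReal (exp (z k) / ∑ j, exp (z j)) := by
  classical
  let A (j : ι) : Set (ℝ × ℝ) := {p | p.2 < p.1 - (z j - z k)}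
  have hA (j : ι) : MeasurableSet (A j) := measurableSet_lt (by fun_prop) (by fun_prop)
  calc Measure.pi (fun _ : ι => gumbelMeasure) {g : ι → ℝ | ∀ j, j ≠ k → z j + g j < z k + g k}
      = Measure.pi (fun _ : ι => gumbelMeasure) {g : ι → ℝ | ∀ j, j ≠ k → (g k, g j) ∈ A j} := by
        congr! 5 with g j
        simp only [A, Set.mem_ofPred_eq]
        constructor <;> intro h <;> linarith
    _ = ∫⁻ x, ∏ j ∈ Finset.univ.erase k, gumbelMeasure (Iio (x - (z j - z k))) ∂gumbelMeasure :=
        measure_pi_forall_ne_mem_eq_lintegral_prod _ k fun j _ => hA j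
    _ = ENNReal.ofReal (1 / (∑ j ∈ Finset.univ.erase k, exp (z j - z k) + 1)) :=
        lintegral_prod_gumbelMeasure_Iio_sub _ _
    _ = ENNReal.ofReal (exp (z k) / ∑ j, exp (z j)) := by
        rw [exp_div_sum_exp_eq_one_div (Finset.mem_univ k)]

/-- **The Gumbel-max trick.**  For `z ∈ ℝ^K` and `μ` the product of `K` independent
standard Gumbel measures, the probability that coordinate `k` attains the strict
argmax of the perturbed scores `z_j + g_j` equals `softmax(z)_k`. -/
theorem gumbel_max_trick (K : ℕ) (hK : 1 ≤ K) (z : Fin K → ℝ) (k : Fin K) :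
    Measure.pi (fun _ : Fin K => gumbelMeasure)
        {g : Fin K → ℝ | ∀ j : Fin K, j ≠ k → z j + g j < z k + g k}
      = ENNReal.ofReal (Real.exp (z k) / ∑ j : Fin K, Real.exp (z j)) :=
  gumbel_max_trick_general z k
end

section
/- (Proposition 2, item 4.) Fix K ≥ 1. Let L be a mixed regular language over the alphabet [K], i.e., a finitely recognizable language over the alphabet Δ_{K-1}. Then its projection proj(L) = { u ∈ [K]* : there exists x ∈ L with the same length as u and u_i ∈ supp(x_i) for every position i } is a finitely recognizable (regular) language over the finite alphabet [K]. -/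
/-- A language over an (arbitrary, possibly infinite) alphabet `α` is finitely
recognizable if it is accepted by some NFA with finitely many states. -/
def FinRecognizable {α : Type*} (L : Language α) : Prop :=
  ∃ (σ : Type) (_ : Fintype σ) (M : NFA α σ), M.accepts = L

/-!
Keep the states of an NFA recognizing `L` and relabel its transitions: `s → t` is allowed on the
letter `a` when the original NFA has a transition `s → t` on some `y` with `a ∈ supp y`. A run of
the new NFA on `u` is then a run of the old one on some `x` with `uᵢ ∈ supp xᵢ` for all `i`. The
letters of the infinite alphabet are never stored in the states, so the state set stays finite.
-/

section LetterwisePreimage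

variable {α β σ : Type*} (R : α → β → Prop)

/-- The preimage of a language under a relation between letters, applied position by position to
words of equal length. The projection of a mixed language is the case where `R a y` says
`a ∈ supp y`. -/
def letterwisePreimage (L : Language β) : Language α :=
  {u | ∃ x ∈ L, List.Forall₂ R u x}

theorem mem_letterwisePreimage {L : Language β} {u : List α} :
    u ∈ letterwisePreimage R L ↔ ∃ x ∈ L, List.Forall₂ R u x :=
  Iff.rfl

/-- The NFA over `α` with the same states as `M` that, on the letter `a`, makes any move `M` can
make on a letter `b` with `R a b`. It recognizes the letterwise preimage of the language of `M`. -/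
def relabelNFA (M : NFA β σ) : NFA α σ where
  step s a := ⋃ (b) (_ : R a b), M.step s b
  start := M.start
  accept := M.accept

theorem stepSet_relabelNFA (M : NFA β σ) (S : Set σ) (a : α) :
    (relabelNFA R M).stepSet S a = ⋃ (b) (_ : R a b), M.stepSet S b := by
  ext t
  simp only [NFA.mem_stepSet, relabelNFA, Set.mem_iUnion, exists_prop]
  tauto

theorem mem_evalFrom_relabelNFA {M : NFA β σ} {S : Set σ} {u : List α} {t : σ} :
    t ∈ (relabelNFA R M).evalFrom S u ↔ ∃ x, List.Forall₂ R u x ∧ t ∈ M.evalFrom S x := by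
  induction u generalizing S with
  | nil => simp
  | cons a u ih =>
    calc t ∈ (relabelNFA R M).evalFrom S (a :: u)
      _ ↔ ∃ x, List.Forall₂ R u x ∧ t ∈ M.evalFrom (⋃ (b) (_ : R a b), M.stepSet S b) x := by
        rw [NFA.evalFrom_cons, stepSet_relabelNFA, ih]
      _ ↔ ∃ x, List.Forall₂ R u x ∧ ∃ b, R a b ∧ t ∈ M.evalFrom S (b :: x) := by
        simp only [NFA.evalFrom_iUnion₂, Set.mem_iUnion, exists_prop, NFA.evalFrom_cons]
      _ ↔ ∃ y, List.Forall₂ R (a :: u) y ∧ t ∈ M.evalFrom S y := by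
        simp only [List.forall₂_cons_left_iff]
        grind

theorem accepts_relabelNFA (M : NFA β σ) :
    (relabelNFA R M).accepts = letterwisePreimage R M.accepts := by
  ext u
  calc u ∈ (relabelNFA R M).accepts
    _ ↔ ∃ t ∈ M.accept, t ∈ (relabelNFA R M).evalFrom M.start u := NFA.mem_accepts
    _ ↔ ∃ t ∈ M.accept, ∃ x, List.Forall₂ R u x ∧ t ∈ M.evalFrom M.start x := by
      simp only [mem_evalFrom_relabelNFA]
    _ ↔ u ∈ letterwisePreimage R M.accepts := by
      simp only [mem_letterwisePreimage, NFA.mem_accepts]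
      tauto

theorem projection_of_mixed_regular_is_regular_general {L : Language β} (hL : FinRecognizable L) :
    FinRecognizable (letterwisePreimage R L) := by
  obtain ⟨σ, hσ, M, rfl⟩ := hL
  exact ⟨σ, hσ, relabelNFA R M, accepts_relabelNFA R M⟩

end LetterwisePreimage

/-- **The projection of a mixed regular language is regular** (Proposition 2, item 4).
If `L` is a finitely recognizable language over the alphabet `Δ_{K-1}` (a mixed
regular language), then its projection
`proj(L) = {u ∈ [K]* : ∃ x ∈ L of the same length with uᵢ ∈ supp(xᵢ) for all i}`
is a finitely recognizable (regular) language over the finite alphabet `[K]`. -/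
theorem projection_of_mixed_regular_is_regular (K : ℕ) (hK : 1 ≤ K)
    (L : Language (stdSimplex ℝ (Fin K))) (hL : FinRecognizable L) :
    FinRecognizable ({u : List (Fin K) | ∃ x ∈ L,
        List.Forall₂ (fun (a : Fin K) (y : stdSimplex ℝ (Fin K)) => 0 < y.1 a) u x} :
      Language (Fin K)) :=
  projection_of_mixed_regular_is_regular_general _ hL
end

section
/- (Binary Gumbel-softmax density.) Let β > 0, z ∈ ℝ, π = 1/(1 + exp(−z)), and let λ be the standard logistic measure. Then the pushforward of λ under the map l ↦ sigmoid((z + l)/β) is supported on (0,1) and has density with respect to Lebesgue measure given by p(y) = β · π(1−π) · y^{−β−1} (1−y)^{−β−1} · ( π y^{−β} + (1−π)(1−y)^{−β} )^{−2} for y ∈ (0,1); that is, for every measurable A ⊆ (0,1), the pushforward measure of A equals ∫_A p(y) dy. -/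
/-!
Let `U` be uniform on `(0,1)`. The variable in question is `sigmoid ((z + logit U) / β)`, a
bijective image of `U` whose inverse `G y = sigmoid (β * logit y - z)` is differentiable, so by the
change of variables formula its density is `|G' y|`. The logistic equation
`sigmoid' = sigmoid * (1 - sigmoid)` gives `G' y = G y * (1 - G y) * β / (y * (1 - y))`, and writing
`exp z` as the odds `π / (1 - π)` turns `G y` into
`(1 - π) (1 - y)^(-β) / (π y^(-β) + (1 - π) (1 - y)^(-β))`.
-/

open MeasureTheory

/-- The standard logistic measure: the pushforward of the uniform probability
measure on `(0,1)` under `u ↦ log u − log(1 − u)`. -/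
noncomputable def logisticMeasure : Measure ℝ :=
  Measure.map (fun u : ℝ => Real.log u - Real.log (1 - u))
    (volume.restrict (Set.Ioo (0 : ℝ) 1))

/-- The sigmoid function `x ↦ 1/(1 + exp(−x))`. -/
noncomputable def sigmoid (x : ℝ) : ℝ := 1 / (1 + Real.exp (-x))

section ChangeOfVariables

open Set

theorem map_restrict_image_eq_withDensity_abs_det_fderiv {E : Type*} [NormedAddCommGroup E]
    [NormedSpace ℝ E] [FiniteDimensional ℝ E] [MeasurableSpace E] [BorelSpace E]
    (μ : Measure E) [μ.IsAddHaarMeasure] {f g : E → E} {g' : E → E →L[ℝ] E} {t : Set E}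
    (ht : NullMeasurableSet t μ) (hf : AEMeasurable f (μ.restrict (g '' t)))
    (hg' : ∀ y ∈ t, HasFDerivWithinAt g (g' y) t y) (hfg : LeftInvOn f g t) :
    (μ.restrict (g '' t)).map f =
      (μ.restrict t).withDensity fun y => ENNReal.ofReal |(g' y).det| := by
  set ν := (μ.restrict t).withDensity fun y => ENNReal.ofReal |(g' y).det|
  have hν : ν ≪ μ.restrict t := withDensity_absolutelyContinuous _ _
  have hg : AEMeasurable g ν :=
    (ContinuousOn.aemeasurable₀ (fun y hy => (hg' y hy).continuousWithinAt) ht).mono_ac hν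
  have hid : f ∘ g =ᵐ[ν] id := hν.ae_le ((ae_restrict_mem₀ ht).mono fun y hy => hfg hy)
  have hmap : ν.map g = μ.restrict (g '' t) :=
    map_withDensity_abs_det_fderiv_eq_addHaar μ ht hg' hfg.injOn
  calc (μ.restrict (g '' t)).map f
      = (ν.map g).map f := by rw [hmap]
    _ = ν.map (f ∘ g) := (hmap ▸ hf).map_map_of_aemeasurable hg
    _ = ν := by rw [Measure.map_congr hid, Measure.map_id]

theorem map_restrict_image_eq_withDensity_abs_deriv {f g g' : ℝ → ℝ} {t : Set ℝ}
    (ht : NullMeasurableSet t) (hf : AEMeasurable f (volume.restrict (g '' t)))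
    (hg' : ∀ y ∈ t, HasDerivWithinAt g (g' y) t y) (hfg : LeftInvOn f g t) :
    (volume.restrict (g '' t)).map f =
      (volume.restrict t).withDensity fun y => ENNReal.ofReal |g' y| := by
  simpa only [ContinuousLinearMap.det_toSpanSingleton] using
    map_restrict_image_eq_withDensity_abs_det_fderiv volume ht hf
      (fun y hy => (hg' y hy).hasFDerivWithinAt) hfg

theorem eq_withDensity_restrict_iff {α : Type*} [MeasurableSpace α] {μ ν : Measure α} {s : Set α}
    {p : α → ENNReal} (hs : MeasurableSet s) :
    ν = (μ.restrict s).withDensity p ↔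
      ν sᶜ = 0 ∧ ∀ A, MeasurableSet A → A ⊆ s → ν A = ∫⁻ y in A, p y ∂μ := by
  constructor
  · rintro rfl
    refine ⟨withDensity_absolutelyContinuous _ _ ?_, fun A hA hAs => ?_⟩
    · rw [Measure.restrict_apply hs.compl, compl_inter_self, measure_empty]
    · rw [withDensity_apply p hA, Measure.restrict_restrict_of_subset hAs]
  · rintro ⟨hsupp, hdensity⟩
    ext A hA
    calc ν A = ν (A ∩ s) := (measure_inter_conull hsupp).symm
      _ = ∫⁻ y in A ∩ s, p y ∂μ := hdensity _ (hA.inter hs) inter_subset_right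
      _ = (μ.restrict s).withDensity p A := by
        rw [withDensity_apply p hA, Measure.restrict_restrict hA]

end ChangeOfVariables

/-- The log-odds function, the inverse of `sigmoid` on `(0,1)`. Outside `(0,1)` its values are those
given by the convention `Real.log x = Real.log |x|`. -/
noncomputable def logit (u : ℝ) : ℝ := Real.log u - Real.log (1 - u)

theorem sigmoid_eq_real_sigmoid : sigmoid = Real.sigmoid :=
  funext fun x => one_div (1 + Real.exp (-x))

theorem sigmoid_mem_Ioo (x : ℝ) : sigmoid x ∈ Set.Ioo (0 : ℝ) 1 := by
  rw [sigmoid_eq_real_sigmoid]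
  exact ⟨Real.sigmoid_pos x, Real.sigmoid_lt_one x⟩

theorem hasDerivAt_sigmoid (x : ℝ) : HasDerivAt sigmoid (sigmoid x * (1 - sigmoid x)) x := by
  rw [sigmoid_eq_real_sigmoid]
  exact Real.hasDerivAt_sigmoid x

theorem measurable_sigmoid : Measurable sigmoid := by
  rw [sigmoid_eq_real_sigmoid]
  exact continuous_sigmoid.measurable

theorem measurable_logit : Measurable logit := by
  unfold logit
  fun_prop

theorem exp_eq_sigmoid_div_one_sub_sigmoid (x : ℝ) :
    Real.exp x = sigmoid x / (1 - sigmoid x) := by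
  have hx : 0 < Real.sigmoid x := Real.sigmoid_pos x
  rw [sigmoid_eq_real_sigmoid, ← Real.sigmoid_neg, ← Real.sigmoid_mul_rexp_neg, Real.exp_neg]
  field_simp

theorem logit_sigmoid (x : ℝ) : logit (sigmoid x) = x := by
  obtain ⟨h0, h1⟩ := sigmoid_mem_Ioo x
  rw [logit, ← Real.log_div h0.ne' (sub_pos.2 h1).ne', ← exp_eq_sigmoid_div_one_sub_sigmoid,
    Real.log_exp]

theorem sigmoid_logit {u : ℝ} (hu : u ∈ Set.Ioo (0 : ℝ) 1) : sigmoid (logit u) = u := by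
  obtain ⟨h0, h1⟩ := hu.imp_right sub_pos.2
  rw [sigmoid, logit, neg_sub, Real.exp_sub, Real.exp_log h0, Real.exp_log h1]
  field_simp
  ring

theorem hasDerivAt_logit {u : ℝ} (h0 : u ≠ 0) (h1 : u ≠ 1) :
    HasDerivAt logit (1 / (u * (1 - u))) u := by
  have h1' : 1 - u ≠ 0 := sub_ne_zero.2 h1.symm
  refine ((Real.hasDerivAt_log h0).sub (((hasDerivAt_id u).const_sub 1).log h1')).congr_deriv ?_
  simp only [id_eq]
  field_simp
  ring

theorem exp_neg_mul_logit (β : ℝ) {u : ℝ} (hu : u ∈ Set.Ioo (0 : ℝ) 1) :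
    Real.exp (-(β * logit u)) = u ^ (-β) / (1 - u) ^ (-β) := by
  rw [Real.rpow_def_of_pos hu.1, Real.rpow_def_of_pos (sub_pos.2 hu.2), ← Real.exp_sub, logit]
  ring_nf

/-- The density at `y ∈ (0,1)` of the binary Gumbel-softmax distribution with temperature `β` and
success probability `π`. The factor `|β|` instead of `β` makes it a density for `β < 0` as well. -/
noncomputable def gumbelSoftmaxDensity (β π y : ℝ) : ℝ :=
  |β| * (π * (1 - π)) * y ^ (-β - 1) * (1 - y) ^ (-β - 1)
    * (π * y ^ (-β) + (1 - π) * (1 - y) ^ (-β)) ^ (-(2 : ℝ))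

section InverseMap

variable {β : ℝ} (z : ℝ)

theorem leftInvOn_sigmoid_add_logit_div (hβ : β ≠ 0) :
    Set.LeftInvOn (fun u => sigmoid ((z + logit u) / β)) (fun y => sigmoid (β * logit y - z))
      (Set.Ioo 0 1) := by
  intro y hy
  simp only [logit_sigmoid, add_sub_cancel, mul_div_cancel_left₀ _ hβ, sigmoid_logit hy]

theorem image_sigmoid_mul_logit_sub (hβ : β ≠ 0) :
    (fun y => sigmoid (β * logit y - z)) '' Set.Ioo 0 1 = Set.Ioo 0 1 := by
  refine Set.Subset.antisymm (Set.image_subset_iff.2 fun _ _ => sigmoid_mem_Ioo _) fun u hu =>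
    ⟨sigmoid ((z + logit u) / β), sigmoid_mem_Ioo _, ?_⟩
  simp only [logit_sigmoid, mul_div_cancel₀ _ hβ, add_sub_cancel_left, sigmoid_logit hu]

variable (β) {y : ℝ}

theorem hasDerivAt_sigmoid_mul_logit_sub (h0 : y ≠ 0) (h1 : y ≠ 1) :
    HasDerivAt (fun y => sigmoid (β * logit y - z))
      (sigmoid (β * logit y - z) * (1 - sigmoid (β * logit y - z))
        * (β * (1 / (y * (1 - y))))) y :=
  (hasDerivAt_sigmoid _).comp y (((hasDerivAt_logit h0 h1).const_mul β).sub_const z)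

theorem sigmoid_mul_logit_sub (hy : y ∈ Set.Ioo (0 : ℝ) 1) :
    sigmoid (β * logit y - z) = (1 - sigmoid z) * (1 - y) ^ (-β) /
      (sigmoid z * y ^ (-β) + (1 - sigmoid z) * (1 - y) ^ (-β)) := by
  obtain ⟨hπ0, hπ1⟩ := (sigmoid_mem_Ioo z).imp_right sub_pos.2
  have ha : 0 < y ^ (-β) := Real.rpow_pos_of_pos hy.1 _
  have hb : 0 < (1 - y) ^ (-β) := Real.rpow_pos_of_pos (sub_pos.2 hy.2) _
  have hodds : Real.exp (-(β * logit y - z)) =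
      sigmoid z / (1 - sigmoid z) * (y ^ (-β) / (1 - y) ^ (-β)) := by
    rw [← exp_eq_sigmoid_div_one_sub_sigmoid, ← exp_neg_mul_logit β hy, ← Real.exp_add]
    ring_nf
  rw [sigmoid, hodds]
  field_simp
  ring

theorem abs_deriv_sigmoid_mul_logit_sub (hy : y ∈ Set.Ioo (0 : ℝ) 1) :
    |sigmoid (β * logit y - z) * (1 - sigmoid (β * logit y - z)) * (β * (1 / (y * (1 - y))))| =
      gumbelSoftmaxDensity β (sigmoid z) y := by
  obtain ⟨hG0, hG1⟩ := sigmoid_mem_Ioo (β * logit y - z)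
  obtain ⟨hπ0, hπ1⟩ := (sigmoid_mem_Ioo z).imp_right sub_pos.2
  obtain ⟨h0, h1⟩ := hy.imp_right sub_pos.2
  have hD : 0 < sigmoid z * y ^ (-β) + (1 - sigmoid z) * (1 - y) ^ (-β) := by positivity
  rw [abs_mul, abs_mul β, abs_of_pos (mul_pos hG0 (sub_pos.2 hG1)),
    abs_of_pos (one_div_pos.2 (mul_pos h0 h1)), gumbelSoftmaxDensity, sigmoid_mul_logit_sub β z hy,
    Real.rpow_sub_one h0.ne', Real.rpow_sub_one h1.ne', Real.rpow_neg hD.le, Real.rpow_two]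
  field_simp
  ring

end InverseMap

theorem binary_gumbel_softmax_density_general {β : ℝ} (z : ℝ) (hβ : β ≠ 0) :
    Measure.map (fun l : ℝ => sigmoid ((z + l) / β)) logisticMeasure =
      (volume.restrict (Set.Ioo (0 : ℝ) 1)).withDensity
        fun y => ENNReal.ofReal (gumbelSoftmaxDensity β (sigmoid z) y) := by
  have hF : Measurable fun l : ℝ => sigmoid ((z + l) / β) :=
    measurable_sigmoid.comp (by fun_prop)
  calc Measure.map (fun l : ℝ => sigmoid ((z + l) / β)) logisticMeasure
      = (volume.restrict (Set.Ioo 0 1)).map (fun u => sigmoid ((z + logit u) / β)) :=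
        Measure.map_map hF measurable_logit
    _ = (volume.restrict (Set.Ioo 0 1)).withDensity _ := by
        nth_rw 1 [← image_sigmoid_mul_logit_sub z hβ]
        exact map_restrict_image_eq_withDensity_abs_deriv nullMeasurableSet_Ioo
          (hF.comp measurable_logit).aemeasurable
          (fun y hy => (hasDerivAt_sigmoid_mul_logit_sub β z hy.1.ne' hy.2.ne).hasDerivWithinAt)
          (leftInvOn_sigmoid_add_logit_div z hβ)
    _ = _ := withDensity_congr_ae ((ae_restrict_mem measurableSet_Ioo).mono fun y hy =>
        congrArg ENNReal.ofReal (abs_deriv_sigmoid_mul_logit_sub β z hy))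

/-- **The binary Gumbel-softmax (concrete) density.**
For temperature `β > 0`, logit `z`, and `π = sigmoid(z)`, the pushforward of the
standard logistic measure under `l ↦ sigmoid((z + l)/β)` is supported on `(0,1)`
and has density
`p(y) = β π(1−π) y^{−β−1}(1−y)^{−β−1} (π y^{−β} + (1−π)(1−y)^{−β})^{−2}`
with respect to Lebesgue measure: the complement of `(0,1)` is null, and for every
measurable `A ⊆ (0,1)` the pushforward of `A` equals `∫_A p(y) dy`. -/
theorem binary_gumbel_softmax_density (β z : ℝ) (hβ : 0 < β) :
    let π : ℝ := 1 / (1 + Real.exp (-z))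
    let p : ℝ → ℝ := fun y =>
      β * (π * (1 - π)) * y ^ (-β - 1) * (1 - y) ^ (-β - 1)
        * (π * y ^ (-β) + (1 - π) * (1 - y) ^ (-β)) ^ (-(2 : ℝ))
    Measure.map (fun l : ℝ => sigmoid ((z + l) / β)) logisticMeasure
        ((Set.Ioo (0 : ℝ) 1)ᶜ) = 0 ∧
    ∀ A : Set ℝ, MeasurableSet A → A ⊆ Set.Ioo (0 : ℝ) 1 →
      Measure.map (fun l : ℝ => sigmoid ((z + l) / β)) logisticMeasure A
        = ∫⁻ y in A, ENNReal.ofReal (p y) := by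
  simpa only [gumbelSoftmaxDensity, sigmoid, abs_of_pos hβ] using
    (eq_withDensity_restrict_iff measurableSet_Ioo).1
      (binary_gumbel_softmax_density_general z hβ.ne')
end
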